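/- arXiv:2010.15730 — 8 statements merged into one kernel-verified Lean document; each statement's English description precedes it below -/
import Mathlib

section
/- Let p ≥ 2 and α ≥ 2. Then the distributed approval voting correspondence has pairwise distinct rows if and only if β ≥ α − 2; that is, the following are equivalent: (i) β ≥ α − 2; (ii) for all distinct x, x' ∈ X there exists y ∈ Y with AM(x+y) ≠ AM(x'+y). -/
/-- The set of candidates receiving the maximum number of cards under `z`. -/
def AM {A : Type*} [Fintype A] (z : A → ℕ) : Set A := {a | ∀ b, z b ≤ z a}

/-! To separate `x` from `x'`, say with `max x' ≤ max x`, pick `a` with `x a < x' a`. As `x' a ≥ 1`,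
lifting `a` to `max x'` takes at most `α - 2 ≤ β` cards; hand out the remaining cards one at a time,
to a candidate strictly below `a` if there is one and to `a` otherwise. Then `a` wins `x' + y`, and
its total is either `max x'` or within one of everybody else's. In the first case `a` loses `x + y`
to a candidate `c` with `x c ≥ max x'`, in the second to any `b` with `x' b < x b`.

Conversely, if `β < α - 2`, then `β` cards cannot change the winner `a` of `(α, 0, 0, …)`, nor that
of `(α - 1, 1, 0, …)`. -/

section

variable {A : Type*} [Fintype A]

theorem exists_lt_of_sum_eq_of_ne {M : Type*} [AddCommMonoid M] [LinearOrder M]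
    [IsOrderedCancelAddMonoid M] {u v : A → M} (hsum : ∑ i, u i = ∑ i, v i) (hne : u ≠ v) :
    ∃ i, u i < v i := by
  by_contra! hle
  exact (Fintype.sum_strictMono (lt_of_le_of_ne hle hne.symm)).ne' hsum

theorem sub_le_sum_sub_two_mul (z : A → ℕ) (i a : A) : z i - z a ≤ ∑ j, z j - 2 * z a := by
  rcases eq_or_ne i a with rfl | hia
  · simp
  · have hpair : z i + z a ≤ ∑ j, z j :=
      Finset.add_le_sum (fun _ _ => Nat.zero_le _) (Finset.mem_univ i) (Finset.mem_univ a) hia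
    omega

theorem exists_mem_AM_add_single [DecidableEq A] {w : A → ℕ} {a : A} (ha : a ∈ AM w) :
    ∃ j, a ∈ AM (w + Pi.single j 1) ∧
      ∀ i, (w + Pi.single j 1 : A → ℕ) a ≤ max (w a) ((w + Pi.single j 1 : A → ℕ) i + 1) := by
  by_cases hbelow : ∃ j, w j < w a
  · obtain ⟨j, hj⟩ := hbelow
    have hja : j ≠ a := by
      rintro rfl
      exact hj.false
    refine ⟨j, fun i => ?_, fun i => by simp [hja.symm]⟩
    rcases eq_or_ne i j with rfl | hij
    · simpa [hja.symm] using hj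
    · simpa [hja.symm, hij] using ha i
  · push Not at hbelow
    refine ⟨a, fun i => ?_, fun i => ?_⟩
    · rcases eq_or_ne i a with rfl | hia
      · exact le_rfl
      · simpa [hia] using (ha i).trans (Nat.le_succ _)
    · have := hbelow i
      simp only [Pi.add_apply, Pi.single_eq_same]
      omega

theorem exists_sum_eq_mem_AM_add {z : A → ℕ} {m n : ℕ} (a : A) (hm : ∀ i, z i ≤ m)
    (hn : m - z a ≤ n) :
    ∃ y : A → ℕ, ∑ i, y i = n ∧ a ∈ AM (z + y) ∧ ∀ i, (z + y) a ≤ max m ((z + y) i + 1) := by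
  classical
  induction n, hn using Nat.le_induction with
  | base =>
    have hlift : (z + Pi.single a (m - z a) : A → ℕ) a = m := by simp [hm a]
    refine ⟨Pi.single a (m - z a), by simp, fun i => ?_, fun i => hlift.trans_le (le_max_left _ _)⟩
    rw [hlift]
    rcases eq_or_ne i a with rfl | hia
    · exact hlift.le
    · simpa [hia] using hm i
  | succ n _ ih =>
    obtain ⟨y, hy, ha, hnear⟩ := ih
    obtain ⟨j, ha', hnear'⟩ := exists_mem_AM_add_single ha
    rw [add_assoc] at ha' hnear'
    refine ⟨y + Pi.single j 1, by simp [Finset.sum_add_distrib, hy], ha', fun i => ?_⟩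
    have hmono : (z + y) i ≤ (z + (y + Pi.single j 1) : A → ℕ) i := by simp [← add_assoc]
    have := hnear i
    have := hnear' i
    omega

theorem exists_AM_add_ne {x x' : A → ℕ} {β : ℕ} {c : A} (hsum : ∑ i, x i = ∑ i, x' i)
    (hne : x ≠ x') (hβ : ∑ i, x' i - 2 ≤ β) (hc : ∀ i, x' i ≤ x c) :
    ∃ y : A → ℕ, ∑ i, y i = β ∧ AM (x + y) ≠ AM (x' + y) := by
  obtain ⟨a, ha⟩ := exists_lt_of_sum_eq_of_ne hsum hne
  obtain ⟨b, hb⟩ := exists_lt_of_sum_eq_of_ne hsum.symm hne.symm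
  have : Nonempty A := ⟨a⟩
  obtain ⟨c', hc'⟩ := Finite.exists_max x'
  have hlift : x' c' - x' a ≤ β := by
    have := sub_le_sum_sub_two_mul x' c' a
    omega
  obtain ⟨y, hy, hwin, hnear⟩ := exists_sum_eq_mem_AM_add a hc' hlift
  have hlose : a ∉ AM (x + y) := by
    intro hmem
    have hxb : x b + y b ≤ x a + y a := hmem b
    have hxc : x c + y c ≤ x a + y a := hmem c
    rcases le_max_iff.1 (hnear b) with hmax | hone
    · have hle : x' a + y a ≤ x' c' := hmax
      have := hc c'
      omega
    · have hle : x' a + y a ≤ x' b + y b + 1 := hone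
      omega
  exact ⟨y, hy, fun heq => hlose (heq ▸ hwin)⟩

theorem AM_add_eq_singleton {z y : A → ℕ} {a : A} (h : ∀ i ≠ a, z i + ∑ j, y j < z a) :
    AM (z + y) = {a} := by
  have hlt (i : A) (hia : i ≠ a) : (z + y) i < (z + y) a :=
    calc z i + y i ≤ z i + ∑ j, y j := by
          gcongr
          exact Finset.single_le_sum_of_canonicallyOrdered (Finset.mem_univ i)
      _ < z a := h i hia
      _ ≤ z a + y a := Nat.le_add_right _ _
  refine Set.Subset.antisymm (fun i hi => ?_) (Set.singleton_subset_iff.2 fun i => ?_)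
  · by_contra hia
    exact (hlt i hia).not_ge (hi a)
  · rcases eq_or_ne i a with rfl | hia
    · exact le_rfl
    · exact (hlt i hia).le

theorem exists_ne_forall_AM_add_eq [Nontrivial A] {α β : ℕ} (h : β + 2 < α) :
    ∃ x x' : A → ℕ, ∑ i, x i = α ∧ ∑ i, x' i = α ∧ x ≠ x' ∧
      ∀ y : A → ℕ, ∑ i, y i = β → AM (x + y) = AM (x' + y) := by
  classical
  obtain ⟨a, b, hab⟩ := exists_pair_ne A
  refine ⟨Pi.single a α, Pi.single a (α - 1) + Pi.single b 1, by simp, ?_, fun heq => ?_, ?_⟩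
  · simp only [Pi.add_apply, Finset.sum_add_distrib, Fintype.sum_pi_single']
    omega
  · simpa [hab.symm] using congrFun heq b
  · rintro y rfl
    rw [AM_add_eq_singleton (a := a), AM_add_eq_singleton (a := a)]
    · intro i hia
      have : (Pi.single b 1 : A → ℕ) i ≤ 1 := by
        rw [Pi.single_apply]
        split_ifs <;> simp
      simp only [Pi.add_apply, Pi.single_eq_same, Pi.single_eq_of_ne hia, Pi.single_eq_of_ne hab]
      omega
    · intro i hia
      simp only [Pi.single_eq_same, Pi.single_eq_of_ne hia]
      omega

end

/-- For `p ≥ 2` and `α ≥ 2`, the DAV correspondence has pairwise distinct rows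
iff `β ≥ α - 2`. -/
theorem dav_correspondence_distinct_rows_iff
    {A : Type*} [Fintype A] (p α β : ℕ)
    (hcard : Fintype.card A = p) (hp : 2 ≤ p) (hα : 2 ≤ α) (hβ : 1 ≤ β) :
    α - 2 ≤ β ↔
      ∀ x x' : A → ℕ, (∑ a, x a) = α → (∑ a, x' a) = α → x ≠ x' →
        ∃ y : A → ℕ, (∑ a, y a) = β ∧ AM (x + y) ≠ AM (x' + y) := by
  have : Nontrivial A := Fintype.one_lt_card_iff_nontrivial.1 (by omega)
  constructor
  · rintro hle x x' rfl hx' hne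
    obtain ⟨c, hc⟩ := Finite.exists_max x
    obtain ⟨c', hc'⟩ := Finite.exists_max x'
    rcases le_total (x' c') (x c) with hmax | hmax
    · exact exists_AM_add_ne hx'.symm hne (hx' ▸ hle) fun i => (hc' i).trans hmax
    · obtain ⟨y, hy, hAM⟩ := exists_AM_add_ne hx' hne.symm hle fun i => (hc i).trans hmax
      exact ⟨y, hy, hAM.symm⟩
  · intro hsep
    by_contra! hlt
    obtain ⟨x, x', hx, hx', hne, heq⟩ := exists_ne_forall_AM_add_eq (A := A) (by omega : β + 2 < α)
    obtain ⟨y, hy, hAM⟩ := hsep x x' hx hx' hne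
    exact hAM (heq y hy)
end

section
/- Suppose p ≥ 3. Let a ≠ b be candidates in A and let x, x' ∈ X satisfy x(a) = x'(a) + 1, x(b) = x'(b) − 1, and x(e) = x'(e) for all e ∈ A \ {a,b}. Then for every y ∈ Y, if AM(x+y) ∩ AM(x'+y) = ∅ then AM(x+y) = {a} and AM(x'+y) = {b}. -/
/-!
Move one card from `a` to `b`. If `b` was already a winner, it remains one. Otherwise `b` was
behind by at least one card, so it can at best draw level, and every winner other than `a` remains
a winner. Hence, if no candidate wins both times, `a` was the only winner before the move;
reversing the move shows that `b` is the only winner after it.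
-/

/-- The tallies `z` and `w` differ by a single card, which `z` gives to `a` and `w` gives to `b`.
For strategies this is the neighbor relation. Both changes are written as additions, avoiding
truncated subtraction; together they exclude `a = b`. -/
structure IsNeighbor {A : Type*} (a b : A) (z w : A → ℕ) : Prop where
  left_eq : z a = w a + 1
  right_eq : z b + 1 = w b
  eq_of_ne : ∀ e, e ≠ a → e ≠ b → z e = w e

namespace IsNeighbor

variable {A : Type*} {a b : A} {z w : A → ℕ}

theorem symm (h : IsNeighbor a b z w) : IsNeighbor b a w z where
  left_eq := h.right_eq.symm
  right_eq := h.left_eq.symm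
  eq_of_ne e hb ha := (h.eq_of_ne e ha hb).symm

theorem add_right (h : IsNeighbor a b z w) (y : A → ℕ) : IsNeighbor a b (z + y) (w + y) where
  left_eq := by simp only [Pi.add_apply, h.left_eq, Nat.add_right_comm]
  right_eq := by simp only [Pi.add_apply, ← h.right_eq, Nat.add_right_comm]
  eq_of_ne e ha hb := congrArg (· + y e) (h.eq_of_ne e ha hb)

theorem le_of_ne_right (h : IsNeighbor a b z w) {e : A} (hb : e ≠ b) : w e ≤ z e := by
  obtain rfl | ha := eq_or_ne e a
  · exact h.left_eq ▸ Nat.le_succ _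
  · exact (h.eq_of_ne e ha hb).ge

end IsNeighbor

section Winners

variable {A : Type*} [Fintype A] {a b e : A} {z w : A → ℕ}

theorem AM_nonempty [Nonempty A] (z : A → ℕ) : (AM z).Nonempty :=
  Finite.exists_max z

theorem lt_of_mem_AM_of_notMem_AM (he : e ∈ AM z) (hb : b ∉ AM z) : z b < z e :=
  lt_of_not_ge fun hle => hb fun f => (he f).trans hle

theorem mem_AM_of_le_of_forall_ne_le (he : e ∈ AM z) (hge : z e ≤ w e)
    (hle : ∀ f, f ≠ e → w f ≤ z f) : e ∈ AM w := by
  intro f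
  obtain rfl | hf := eq_or_ne f e
  · exact le_rfl
  · exact (hle f hf).trans ((he f).trans hge)

namespace IsNeighbor

theorem right_mem_AM (h : IsNeighbor a b z w) (hb : b ∈ AM z) : b ∈ AM w :=
  mem_AM_of_le_of_forall_ne_le hb (h.right_eq ▸ Nat.le_succ _) fun _ => h.le_of_ne_right

theorem mem_AM_of_right_notMem_AM (h : IsNeighbor a b z w) (hb : b ∉ AM z) (he : e ∈ AM z)
    (hea : e ≠ a) : e ∈ AM w := by
  have heq : z e = w e := h.eq_of_ne e hea (ne_of_mem_of_not_mem he hb)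
  intro f
  rw [← heq]
  obtain rfl | hf := eq_or_ne f b
  · exact h.right_eq ▸ Nat.succ_le_of_lt (lt_of_mem_AM_of_notMem_AM he hb)
  · exact (h.le_of_ne_right hf).trans (he f)

theorem AM_eq_singleton (h : IsNeighbor a b z w) (hdisj : Disjoint (AM z) (AM w)) :
    AM z = {a} := by
  have : Nonempty A := ⟨a⟩
  have hb : b ∉ AM z := fun hb => hdisj.notMem_of_mem_left hb (h.right_mem_AM hb)
  refine (AM_nonempty z).subset_singleton_iff.mp fun e he => ?_
  by_contra hea
  exact hdisj.notMem_of_mem_left he (h.mem_AM_of_right_notMem_AM hb he hea)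

end IsNeighbor

theorem disjoint_AM_of_neighbors_general (h : IsNeighbor a b z w)
    (hdisj : Disjoint (AM z) (AM w)) : AM z = {a} ∧ AM w = {b} :=
  ⟨h.AM_eq_singleton hdisj, h.symm.AM_eq_singleton hdisj.symm⟩

end Winners

/-- For `p ≥ 3` and neighboring strategies `x, x'` (differing by moving one card
from `b` to `a`), if `AM(x+y)` and `AM(x'+y)` are disjoint then they are the
singletons `{a}` and `{b}`. -/
theorem disjoint_AM_of_neighbors
    {A : Type*} [Fintype A] (α β : ℕ) (hα : 1 ≤ α) (hβ : 1 ≤ β)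
    (hp : 3 ≤ Fintype.card A)
    (a b : A) (hab : a ≠ b)
    (x x' : A → ℕ) (hx : (∑ e, x e) = α) (hx' : (∑ e, x' e) = α)
    (h1 : x a = x' a + 1) (h2 : x b + 1 = x' b)
    (h3 : ∀ e, e ≠ a → e ≠ b → x e = x' e)
    (y : A → ℕ) (hy : (∑ e, y e) = β)
    (hdisj : AM (x + y) ∩ AM (x' + y) = ∅) :
    AM (x + y) = {a} ∧ AM (x' + y) = {b} :=
  disjoint_AM_of_neighbors_general (IsNeighbor.add_right ⟨h1, h2, h3⟩ y)
    (Set.disjoint_iff_inter_eq_empty.mpr hdisj)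
end

section
/- Let x, x' ∈ X be distinct and let B = B(x,x') = {a ∈ A | x(a) > x'(a)}. Then U(x',B) ⊆ L(x,B); that is, for every y ∈ Y, if AM(x'+y) ∩ B ≠ ∅ then AM(x+y) ⊆ B. -/
theorem lt_of_isMaxOn_add {A M : Type*} [Add M] [Preorder M] [AddRightStrictMono M]
    [AddRightReflectLT M] {x x' y : A → M} {s : Set A} {a c : A}
    (ha : IsMaxOn (x' + y) s a) (hxa : x' a < x a) (has : a ∈ s)
    (hc : IsMaxOn (x + y) s c) (hcs : c ∈ s) : x' c < x c := by
  refine lt_of_add_lt_add_right (a := y c) ?_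
  calc
    x' c + y c ≤ x' a + y a := ha hcs
    _ < x a + y a := by gcongr
    _ ≤ x c + y c := hc has

theorem U_subset_L_general {A M : Type*} [Add M] [Preorder M] [AddRightStrictMono M]
    [AddRightReflectLT M] (x x' y : A → M) (s : Set A) :
    ({a ∈ s | IsMaxOn (x' + y) s a} ∩ {a | x' a < x a}).Nonempty →
      {a ∈ s | IsMaxOn (x + y) s a} ⊆ {a | x' a < x a} := by
  rintro ⟨a, ⟨has, ha⟩, hxa⟩ c ⟨hcs, hc⟩
  exact lt_of_isMaxOn_add ha hxa has hc hcs

/-- For distinct `x, x' ∈ X` and `B = B(x,x') = {a | x a > x' a}` we have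
`U(x',B) ⊆ L(x,B)`: if `AM(x'+y)` meets `B` then `AM(x+y) ⊆ B`. -/
theorem U_subset_L
    {A : Type*} [Fintype A] (α β : ℕ) (hα : 1 ≤ α) (hβ : 1 ≤ β)
    (x x' : A → ℕ) (hx : (∑ a, x a) = α) (hx' : (∑ a, x' a) = α) (hne : x ≠ x')
    (B : Set A) (hB : B = {a | x' a < x a})
    (y : A → ℕ) (hy : (∑ a, y a) = β) :
    (AM (x' + y) ∩ B).Nonempty → AM (x + y) ⊆ B := by
  subst hB
  simpa only [AM, Set.mem_univ, true_and, isMaxOn_univ_iff] using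
    U_subset_L_general x x' y Set.univ
end

section
/- Let g : Fin p → Fin p → A be a p × p voting form, let i ≠ j be two distinct rows (or two distinct columns) of g, and let a ∈ A be a candidate such that each of the two lines i and j contains at least two entries equal to a. Then g contains m1 or m2 as a submatrix. -/
/-- `g` contains the pattern `m1 = [[a,b],[c,a]]` as a submatrix. -/
def ContainsM1 {p : ℕ} {A : Type*} (g : Fin p → Fin p → A) : Prop :=
  ∃ i k j l : Fin p, i ≠ k ∧ j ≠ l ∧
    g i j = g k l ∧ g i l ≠ g i j ∧ g k j ≠ g i j

/-- `g` contains the pattern `m2 = [[a,a],[a,a]]` as a submatrix. -/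
def ContainsM2 {p : ℕ} {A : Type*} (g : Fin p → Fin p → A) : Prop :=
  ∃ i k j l : Fin p, i ≠ k ∧ j ≠ l ∧
    g i j = g i l ∧ g i j = g k j ∧ g i j = g k l

/-- Candidate `a` occurs at least twice in row `i` of `g`. -/
def TwiceInRow {p : ℕ} {A : Type*} (g : Fin p → Fin p → A) (i : Fin p) (a : A) : Prop :=
  ∃ j l : Fin p, j ≠ l ∧ g i j = a ∧ g i l = a

/-- Candidate `a` occurs at least twice in column `j` of `g`. -/
def TwiceInCol {p : ℕ} {A : Type*} (g : Fin p → Fin p → A) (j : Fin p) (a : A) : Prop :=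
  ∃ i k : Fin p, i ≠ k ∧ g i j = a ∧ g k j = a

/-- `g` contains the pattern `m3 = [a,a,b,b]` in some line (row or column). -/
def ContainsM3 {p : ℕ} {A : Type*} (g : Fin p → Fin p → A) : Prop :=
  (∃ (i : Fin p) (a b : A), a ≠ b ∧ TwiceInRow g i a ∧ TwiceInRow g i b) ∨
  (∃ (j : Fin p) (a b : A), a ≠ b ∧ TwiceInCol g j a ∧ TwiceInCol g j b)

/-- `g` is a plurality DAV form: rows and columns can be bijectively labeled by
candidates so that every entry equals its row label or its column label. -/
def IsPluralityDAV {p : ℕ} {A : Type*} (g : Fin p → Fin p → A) : Prop :=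
  ∃ σ τ : Fin p → A, Function.Bijective σ ∧ Function.Bijective τ ∧
    ∀ i j, g i j = σ i ∨ g i j = τ j

/-!
Let `s` and `t` be the sets of positions at which the two lines carry `a`. If neither set contains
the other, a position from `s \ t` and one from `t \ s` give `m1`. Otherwise the smaller set is
`s ∩ t`, and two of its positions give `m2`.
-/

theorem sdiff_nonempty_and_sdiff_nonempty_or_inter_nontrivial {α : Type*} {s t : Set α}
    (hs : s.Nontrivial) (ht : t.Nontrivial) :
    ((s \ t).Nonempty ∧ (t \ s).Nonempty) ∨ (s ∩ t).Nontrivial := by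
  by_cases hst : s ⊆ t
  · exact Or.inr (by rwa [Set.inter_eq_left.2 hst])
  by_cases hts : t ⊆ s
  · exact Or.inr (by rwa [Set.inter_eq_right.2 hts])
  exact Or.inl ⟨Set.sdiff_nonempty.2 hst, Set.sdiff_nonempty.2 hts⟩

section Array

variable {m n A : Type*} {g : m → n → A} {a : A}

/-- The pattern `m1` for a rectangular array with arbitrary index types; on square voting forms it
unfolds to `ContainsM1`. -/
def HasM1 (g : m → n → A) : Prop :=
  ∃ (i k : m) (j l : n), i ≠ k ∧ j ≠ l ∧ g i j = g k l ∧ g i l ≠ g i j ∧ g k j ≠ g i j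

/-- The pattern `m2` for a rectangular array with arbitrary index types; on square voting forms it
unfolds to `ContainsM2`. -/
def HasM2 (g : m → n → A) : Prop :=
  ∃ (i k : m) (j l : n), i ≠ k ∧ j ≠ l ∧ g i j = g i l ∧ g i j = g k j ∧ g i j = g k l

theorem HasM1.swap : HasM1 g → HasM1 (Function.swap g) :=
  fun ⟨i, k, j, l, hik, hjl, hdiag, hil, hkj⟩ => ⟨j, l, i, k, hjl, hik, hdiag, hkj, hil⟩

theorem HasM2.swap : HasM2 g → HasM2 (Function.swap g) :=
  fun ⟨i, k, j, l, hik, hjl, hil, hkj, hkl⟩ => ⟨j, l, i, k, hjl, hik, hkj, hil, hkl⟩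

theorem hasM1_of_sdiff_nonempty {i k : m} (hik : (g i ⁻¹' {a} \ g k ⁻¹' {a}).Nonempty)
    (hki : (g k ⁻¹' {a} \ g i ⁻¹' {a}).Nonempty) : HasM1 g := by
  obtain ⟨j, hij : g i j = a, hkj : g k j ≠ a⟩ := hik
  obtain ⟨l, hkl : g k l = a, hil : g i l ≠ a⟩ := hki
  have hrow : i ≠ k := by rintro rfl; exact hkj hij
  have hcol : j ≠ l := by rintro rfl; exact hkj hkl
  exact ⟨i, k, j, l, hrow, hcol, hij.trans hkl.symm, hij ▸ hil, hij ▸ hkj⟩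

theorem hasM2_of_inter_nontrivial {i k : m} (hik : i ≠ k)
    (h : (g i ⁻¹' {a} ∩ g k ⁻¹' {a}).Nontrivial) : HasM2 g := by
  obtain ⟨j, ⟨hij : g i j = a, hkj : g k j = a⟩, l, ⟨hil : g i l = a, hkl : g k l = a⟩, hjl⟩ := h
  exact ⟨i, k, j, l, hik, hjl, hij.trans hil.symm, hij.trans hkj.symm, hij.trans hkl.symm⟩

theorem hasM1_or_hasM2_of_rows_nontrivial {i k : m} (hik : i ≠ k)
    (hi : (g i ⁻¹' {a}).Nontrivial) (hk : (g k ⁻¹' {a}).Nontrivial) : HasM1 g ∨ HasM2 g :=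
  (sdiff_nonempty_and_sdiff_nonempty_or_inter_nontrivial hi hk).imp
    (fun h => hasM1_of_sdiff_nonempty h.1 h.2) (hasM2_of_inter_nontrivial hik)

theorem containsM1_or_M2_of_two_pairs_general (g : m → n → A) (a : A)
    (h : (∃ i k, i ≠ k ∧ (g i ⁻¹' {a}).Nontrivial ∧ (g k ⁻¹' {a}).Nontrivial) ∨
      (∃ j l, j ≠ l ∧ (Function.swap g j ⁻¹' {a}).Nontrivial ∧
        (Function.swap g l ⁻¹' {a}).Nontrivial)) :
    HasM1 g ∨ HasM2 g := by
  rcases h with ⟨i, k, hik, hi, hk⟩ | ⟨j, l, hjl, hj, hl⟩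
  · exact hasM1_or_hasM2_of_rows_nontrivial hik hi hk
  · exact (hasM1_or_hasM2_of_rows_nontrivial hjl hj hl).imp HasM1.swap HasM2.swap

end Array

section VotingForm

variable {p : ℕ} {A : Type*} {g : Fin p → Fin p → A} {a : A}

theorem TwiceInRow.nontrivial_preimage {i : Fin p} :
    TwiceInRow g i a → (g i ⁻¹' {a}).Nontrivial :=
  fun ⟨j, l, hjl, hj, hl⟩ => ⟨j, hj, l, hl, hjl⟩

theorem TwiceInCol.nontrivial_preimage {j : Fin p} :
    TwiceInCol g j a → (Function.swap g j ⁻¹' {a}).Nontrivial :=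
  fun ⟨i, k, hik, hi, hk⟩ => ⟨i, hi, k, hk, hik⟩

end VotingForm

/-- If two distinct parallel lines of `g` each contain at least two occurrences
of the same candidate `a`, then `g` contains `m1` or `m2` as a submatrix. -/
theorem containsM1_or_M2_of_two_pairs
    {p : ℕ} {A : Type*} (g : Fin p → Fin p → A) (i j : Fin p) (hij : i ≠ j) (a : A)
    (h : (TwiceInRow g i a ∧ TwiceInRow g j a) ∨ (TwiceInCol g i a ∧ TwiceInCol g j a)) :
    ContainsM1 g ∨ ContainsM2 g :=
  containsM1_or_M2_of_two_pairs_general g a <| h.imp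
    (fun h => ⟨i, j, hij, h.1.nontrivial_preimage, h.2.nontrivial_preimage⟩)
    (fun h => ⟨i, j, hij, h.1.nontrivial_preimage, h.2.nontrivial_preimage⟩)
end

section
/- Let A be a finite set of exactly p candidates and let g : Fin p → Fin p → A be a p × p voting form in which every candidate of A appears as an entry, and which contains none of m1, m2, m3 as a submatrix. Then g is a plurality DAV form: there exist bijections σ : Fin p → A and τ : Fin p → A such that for all i, j, either g(i,j) = σ(i) or g(i,j) = τ(j). -/
/-!
For each candidate, the absence of `m1` makes the sets of columns in which the rows show it a chain
under inclusion. Two rows cannot both show it twice, since the smaller of their two column sets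
would then produce `m2`. As `m3` is also absent, sending a row to its repeated candidate
is a partial injection from rows to candidates. Extend it to a bijection `σ`, and treat the columns
likewise to get `τ`.

Every label `σ i` occurs in row `i`: either it is repeated there, or the row has no repetition and
so shows all `p` candidates. Now suppose the entry `a` at `(i, j)` is not `σ i`, and let `k` be the
row labeled `a`. Row `i` shows `a` only in column `j` while row `k` shows `a` somewhere, so by
nestedness row `k` shows `a` in column `j` too. Hence `a` is repeated in column `j`, so `a = τ j`.
-/

open Function Set

theorem exists_equiv_of_biUnique {α β : Type*} [Fintype α] [Fintype β]
    (hcard : Fintype.card α = Fintype.card β) {r : α → β → Prop} (hr : Relator.BiUnique r) :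
    ∃ e : α ≃ β, ∀ a b, r a b → e a = b := by
  rcases isEmpty_or_nonempty β with hβ | hβ
  · exact ⟨Fintype.equivOfCardEq hcard, fun _ b => isEmptyElim b⟩
  classical
  have hdom : ∀ a ∈ {a | ∃ b, r a b}, ∃ b, r a b := fun _ ha => ha
  choose! f hf using hdom
  have hinj : InjOn f {a | ∃ b, r a b} :=
    fun a ha b hb h => hr.1 (hf a ha) (h ▸ hf b hb)
  obtain ⟨e, he⟩ := MapsTo.exists_equiv_extend_of_card_eq (t := Finset.univ) hcard
    (fun _ _ => Finset.mem_coe.2 (Finset.mem_univ _)) hinj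
  refine ⟨e.trans (Equiv.subtypeUnivEquiv Finset.mem_univ), fun a b hab => ?_⟩
  exact (he a ⟨b, hab⟩).trans (hr.2 (hf a ⟨b, hab⟩) hab)

theorem mem_range_of_forall_nontrivial_preimage {α β : Type*} [Finite β] {f : α → β}
    (hcard : Nat.card β ≤ Nat.card α) {b : β}
    (hb : ∀ c, (f ⁻¹' {c}).Nontrivial → b = c) : b ∈ range f := by
  by_cases hf : Injective f
  · exact (hf.bijective_of_nat_card_le hcard).surjective b
  · obtain ⟨x, y, hxy, hne⟩ := not_injective_iff.1 hf
    exact ⟨x, (hb (f x) ⟨x, rfl, y, hxy.symm, hne⟩).symm⟩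

section VotingForm

variable {R C A : Type*} {g : R → C → A}

/-- Absence of the pattern `m1`, for arbitrary index types: the cells holding any given candidate
form a Ferrers relation between rows and columns. The conditions `i ≠ k` and `j ≠ l` are left out
because the conclusion is immediate when one of them fails. -/
def IsFerrers (g : R → C → A) : Prop :=
  ∀ ⦃i k j l⦄, g i j = g k l → g i l = g i j ∨ g k j = g i j

/-- Absence of the pattern `m2`, for arbitrary index types: no candidate fills the four corners of
a nondegenerate rectangle. -/
def IsRectangleFree (g : R → C → A) : Prop :=
  ∀ ⦃i k j l⦄, g i j = g i l → g i j = g k j → g i j = g k l → i = k ∨ j = l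

/-- Candidate `a` occurs at least twice in row `i` of `g`: this is `TwiceInRow` for arbitrary index
types. Repetition in a column is expressed by applying it to `swap g`. -/
def RepeatsInRow (g : R → C → A) (i : R) (a : A) : Prop :=
  (g i ⁻¹' {a}).Nontrivial

theorem IsFerrers.swap (hg : IsFerrers g) : IsFerrers (swap g) :=
  fun _ _ _ _ h => (hg h).symm

theorem IsRectangleFree.swap (hg : IsRectangleFree g) : IsRectangleFree (swap g) :=
  fun _ _ _ _ hcol hrow hdiag => (hg hrow hcol hdiag).symm

theorem IsFerrers.preimage_subset_or_subset (hg : IsFerrers g) (i k : R) (a : A) :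
    g i ⁻¹' {a} ⊆ g k ⁻¹' {a} ∨ g k ⁻¹' {a} ⊆ g i ⁻¹' {a} := by
  refine or_iff_not_imp_left.2 fun hik l (hl : g k l = a) => ?_
  obtain ⟨j, hj : g i j = a, hkj : g k j ≠ a⟩ := not_subset.1 hik
  rcases hg (hj.trans hl.symm) with hil | hkj'
  · exact hil.trans hj
  · exact absurd (hkj'.trans hj) hkj

theorem IsRectangleFree.eq_of_preimage_subset (hg : IsRectangleFree g) {i k : R} {a : A}
    (hi : RepeatsInRow g i a) (hik : g i ⁻¹' {a} ⊆ g k ⁻¹' {a}) : i = k := by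
  obtain ⟨j, hj, l, hl, hjl⟩ := hi
  have hkj : g k j = a := hik hj
  have hkl : g k l = a := hik hl
  rw [mem_preimage, mem_singleton_iff] at hj hl
  exact (hg (hj.trans hl.symm) (hj.trans hkj.symm) (hj.trans hkl.symm)).resolve_right hjl

theorem IsFerrers.leftUnique_repeatsInRow (hg : IsFerrers g) (hrect : IsRectangleFree g) :
    Relator.LeftUnique (RepeatsInRow g) := by
  intro i k a hi hk
  rcases hg.preimage_subset_or_subset i k a with hik | hki
  · exact hrect.eq_of_preimage_subset hi hik
  · exact (hrect.eq_of_preimage_subset hk hki).symm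

theorem IsFerrers.repeatsInRow_or_eq (hg : IsFerrers g) {i k : R} {j : C}
    (hk : g i j ∈ range (g k)) : RepeatsInRow g i (g i j) ∨ g k j = g i j := by
  obtain ⟨l, hl⟩ := hk
  rcases eq_or_ne j l with rfl | hjl
  · exact Or.inr hl
  · exact (hg hl.symm).imp_left fun hil => ⟨j, rfl, l, hil, hjl⟩

theorem IsFerrers.eq_rowLabel_or_eq_colLabel (hg : IsFerrers g) {σ : R → A} {τ : C → A}
    (hσ : Surjective σ) (hmem : ∀ i, σ i ∈ range (g i))
    (hrow : ∀ i a, RepeatsInRow g i a → σ i = a)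
    (hcol : ∀ j a, RepeatsInRow (Function.swap g) j a → τ j = a) (i : R) (j : C) :
    g i j = σ i ∨ g i j = τ j := by
  obtain ⟨k, hk⟩ := hσ (g i j)
  rcases hg.repeatsInRow_or_eq (hk ▸ hmem k) with hrep | hkj
  · exact Or.inl (hrow i _ hrep).symm
  rcases eq_or_ne i k with rfl | hik
  · exact Or.inl hk.symm
  · exact Or.inr (hcol j _ ⟨i, rfl, k, hkj, hik⟩).symm

end VotingForm

section ForbiddenPatterns

variable {p : ℕ} {A : Type*} {g : Fin p → Fin p → A}

theorem isFerrers_of_not_containsM1 (h : ¬ ContainsM1 g) : IsFerrers g := by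
  intro i k j l hdiag
  by_contra! ⟨hil, hkj⟩
  have hik : i ≠ k := fun e => hil (e ▸ hdiag.symm)
  have hjl : j ≠ l := fun e => hkj (e ▸ hdiag.symm)
  exact h ⟨i, k, j, l, hik, hjl, hdiag, hil, hkj⟩

theorem isRectangleFree_of_not_containsM2 (h : ¬ ContainsM2 g) : IsRectangleFree g := by
  intro i k j l hrow hcol hdiag
  by_contra! ⟨hik, hjl⟩
  exact h ⟨i, k, j, l, hik, hjl, hrow, hcol, hdiag⟩

theorem RepeatsInRow.twiceInRow {i : Fin p} {a : A} (h : RepeatsInRow g i a) :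
    TwiceInRow g i a :=
  let ⟨j, hj, l, hl, hjl⟩ := h
  ⟨j, l, hjl, hj, hl⟩

theorem RepeatsInRow.twiceInCol {j : Fin p} {a : A} (h : RepeatsInRow (swap g) j a) :
    TwiceInCol g j a :=
  h.twiceInRow

theorem rightUnique_repeatsInRow_of_not_containsM3 (h : ¬ ContainsM3 g) :
    Relator.RightUnique (RepeatsInRow g) := fun i a b ha hb =>
  by_contra fun hab => h (Or.inl ⟨i, a, b, hab, ha.twiceInRow, hb.twiceInRow⟩)

theorem rightUnique_repeatsInRow_swap_of_not_containsM3 (h : ¬ ContainsM3 g) :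
    Relator.RightUnique (RepeatsInRow (swap g)) := fun j a b ha hb =>
  by_contra fun hab => h (Or.inr ⟨j, a, b, hab, ha.twiceInCol, hb.twiceInCol⟩)

end ForbiddenPatterns

/-- If every candidate appears in `g` and `g` contains none of `m1, m2, m3`,
then `g` is a plurality DAV form. -/
theorem isPluralityDAV_of_no_forbidden
    {p : ℕ} {A : Type*} [Fintype A] (hA : Fintype.card A = p)
    (g : Fin p → Fin p → A) (hsurj : ∀ a : A, ∃ i j, g i j = a)
    (h1 : ¬ ContainsM1 g) (h2 : ¬ ContainsM2 g) (h3 : ¬ ContainsM3 g) :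
    IsPluralityDAV g := by
  have hg : IsFerrers g := isFerrers_of_not_containsM1 h1
  have hrect : IsRectangleFree g := isRectangleFree_of_not_containsM2 h2
  have hcard : Fintype.card (Fin p) = Fintype.card A := by rw [Fintype.card_fin, hA]
  obtain ⟨σ, hσ⟩ := exists_equiv_of_biUnique hcard
    ⟨hg.leftUnique_repeatsInRow hrect, rightUnique_repeatsInRow_of_not_containsM3 h3⟩
  obtain ⟨τ, hτ⟩ := exists_equiv_of_biUnique hcard
    ⟨hg.swap.leftUnique_repeatsInRow hrect.swap,
      rightUnique_repeatsInRow_swap_of_not_containsM3 h3⟩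
  have hmem (i : Fin p) : σ i ∈ range (g i) :=
    mem_range_of_forall_nontrivial_preimage (Nat.card_congr σ).ge (hσ i)
  exact ⟨σ, τ, σ.bijective, τ.bijective,
    hg.eq_rowLabel_or_eq_colLabel σ.surjective hmem hσ hτ⟩
end

section
/- Let A be a finite set of exactly p candidates and let g : Fin p → Fin p → A be a p × p voting form that contains m1, m2, or m3 as a submatrix. Then g is not a plurality DAV form: there do not exist bijections σ : Fin p → A and τ : Fin p → A such that for all i, j, either g(i,j) = σ(i) or g(i,j) = τ(j). -/
/-!
Since the column labels are distinct, a candidate occurring twice in a row must be that row's label,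
and dually for columns. So a line cannot repeat two different candidates, which excludes `m3`, and
two rows repeating the same candidate would share a label, which excludes `m2`. For `m1`, the two
equal diagonal entries cannot both be row labels, nor both column labels; so one is its row's label
and the other its column's label, and both labels of the entry where this row and this column cross
are the repeated candidate.
-/

section Labeling

variable {I J A : Type*} {g : I → J → A} {σ : I → A} {τ : J → A}

/-- The row labels `σ` and column labels `τ` account for every entry of the array `g`, as in the
definition of a DAV form. No bijectivity is included, and rows and columns may be indexed by
different types. -/
def IsLabeledBy (g : I → J → A) (σ : I → A) (τ : J → A) : Prop :=
  ∀ i j, g i j = σ i ∨ g i j = τ j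

namespace IsLabeledBy

theorem swap (hg : IsLabeledBy g σ τ) : IsLabeledBy (Function.swap g) τ σ :=
  fun j i => (hg i j).symm

theorem eq_rowLabel_of_eq (hg : IsLabeledBy g σ τ) (hτ : Function.Injective τ) {i : I} {j l : J}
    (hjl : j ≠ l) (h : g i j = g i l) : g i j = σ i := by
  rcases hg i j with hj | hj
  · exact hj
  rcases hg i l with hl | hl
  · exact h.trans hl
  · exact absurd (hτ (hj.symm.trans (h.trans hl))) hjl

theorem eq_of_rowLabel_eq_colLabel (hg : IsLabeledBy g σ τ) {i : I} {l : J} (h : σ i = τ l) :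
    g i l = σ i :=
  (hg i l).elim id (·.trans h.symm)

theorem eq_or_eq_of_diagonal_eq (hg : IsLabeledBy g σ τ) (hσ : Function.Injective σ)
    (hτ : Function.Injective τ) {i k : I} {j l : J} (hik : i ≠ k) (hjl : j ≠ l)
    (h : g i j = g k l) : g i l = g i j ∨ g k j = g i j := by
  rcases hg i j with hij | hij <;> rcases hg k l with hkl | hkl
  · exact absurd (hσ (hij.symm.trans (h.trans hkl))) hik
  · have label_eq : σ i = τ l := hij.symm.trans (h.trans hkl)
    exact Or.inl ((hg.eq_of_rowLabel_eq_colLabel label_eq).trans hij.symm)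
  · have label_eq : σ k = τ j := hkl.symm.trans (h.symm.trans hij)
    exact Or.inr ((hg.eq_of_rowLabel_eq_colLabel label_eq).trans (hkl.symm.trans h.symm))
  · exact absurd (hτ (hij.symm.trans (h.trans hkl))) hjl

end IsLabeledBy

end Labeling

namespace IsLabeledBy

variable {p : ℕ} {A : Type*} {g : Fin p → Fin p → A} {σ τ : Fin p → A}

theorem eq_rowLabel_of_twiceInRow (hg : IsLabeledBy g σ τ) (hτ : Function.Injective τ)
    {i : Fin p} {a : A} (h : TwiceInRow g i a) : a = σ i := by
  obtain ⟨j, l, hjl, rfl, hl⟩ := h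
  exact hg.eq_rowLabel_of_eq hτ hjl hl.symm

theorem eq_colLabel_of_twiceInCol (hg : IsLabeledBy g σ τ) (hσ : Function.Injective σ)
    {j : Fin p} {a : A} (h : TwiceInCol g j a) : a = τ j :=
  hg.swap.eq_rowLabel_of_twiceInRow hσ h

theorem not_containsM1 (hg : IsLabeledBy g σ τ) (hσ : Function.Injective σ)
    (hτ : Function.Injective τ) : ¬ ContainsM1 g := by
  rintro ⟨i, k, j, l, hik, hjl, hdiag, hil, hkj⟩
  exact (hg.eq_or_eq_of_diagonal_eq hσ hτ hik hjl hdiag).elim hil hkj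

theorem not_containsM2 (hg : IsLabeledBy g σ τ) (hσ : Function.Injective σ)
    (hτ : Function.Injective τ) : ¬ ContainsM2 g := by
  rintro ⟨i, k, j, l, hik, hjl, hil, hkj, hkl⟩
  have row_i : g i j = σ i := hg.eq_rowLabel_of_eq hτ hjl hil
  have row_k : g k j = σ k := hg.eq_rowLabel_of_eq hτ hjl (hkj.symm.trans hkl)
  exact hik (hσ (row_i.symm.trans (hkj.trans row_k)))

theorem not_containsM3 (hg : IsLabeledBy g σ τ) (hσ : Function.Injective σ)
    (hτ : Function.Injective τ) : ¬ ContainsM3 g := by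
  rintro (⟨i, a, b, hab, ha, hb⟩ | ⟨j, a, b, hab, ha, hb⟩)
  · exact hab ((hg.eq_rowLabel_of_twiceInRow hτ ha).trans
      (hg.eq_rowLabel_of_twiceInRow hτ hb).symm)
  · exact hab ((hg.eq_colLabel_of_twiceInCol hσ ha).trans
      (hg.eq_colLabel_of_twiceInCol hσ hb).symm)

end IsLabeledBy

theorem not_isPluralityDAV_of_forbidden_general {p : ℕ} {A : Type*} {g : Fin p → Fin p → A}
    (h : ContainsM1 g ∨ ContainsM2 g ∨ ContainsM3 g) {σ τ : Fin p → A}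
    (hσ : Function.Injective σ) (hτ : Function.Injective τ) : ¬ IsLabeledBy g σ τ := by
  intro hg
  rcases h with h1 | h2 | h3
  · exact hg.not_containsM1 hσ hτ h1
  · exact hg.not_containsM2 hσ hτ h2
  · exact hg.not_containsM3 hσ hτ h3

/-- If `g` contains `m1`, `m2`, or `m3` as a submatrix, then `g` is not a
plurality DAV form. -/
theorem not_isPluralityDAV_of_forbidden
    {p : ℕ} {A : Type*} [Fintype A] (hA : Fintype.card A = p)
    (g : Fin p → Fin p → A)
    (h : ContainsM1 g ∨ ContainsM2 g ∨ ContainsM3 g) :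
    ¬ IsPluralityDAV g := by
  rintro ⟨σ, τ, hσ, hτ, hg⟩
  exact not_isPluralityDAV_of_forbidden_general h hσ.injective hτ.injective hg
end

section
/- The set of forbidden patterns {m1, m2, m3} is minimal: for each index i ∈ {1,2,3} there exist a natural number p, a finite set A of exactly p candidates, and a p × p voting form g : Fin p → Fin p → A in which every candidate of A appears, such that g contains pattern m_i as a submatrix, contains neither of the other two patterns, and g is not a plurality DAV form (no bijections σ, τ : Fin p → A exist with g(i,j) ∈ {σ(i), τ(j)} for all i, j). -/
/-!
If rows and columns carry injective labels and two entries `g i j = g k l = a` lie in distinct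
rows and columns, then `a` labels either row `i` and column `l`, or row `k` and column `j`. So `a`
fills exactly one of the two other corners `(i, l)` and `(k, j)`; it fills neither of them in `m1`
and both of them in `m2`. A candidate occurring twice in a line must label that line, which rules
out `m3`. Hence each pattern alone prevents a form from being a DAV form, and it suffices to
exhibit, for each pattern, a form which contains that pattern only.
-/

/-- A labeling of a form: `σ` labels the rows and `τ` the columns, each without repetition, and
every entry is one of its two labels. In contrast to `IsPluralityDAV`, rows and columns may be
indexed by different types and the labels need not exhaust the candidates. -/
structure IsInjLabeling {ι κ A : Type*} (g : ι → κ → A) (σ : ι → A) (τ : κ → A) : Prop where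
  row_injective : Function.Injective σ
  col_injective : Function.Injective τ
  eq_row_or_eq_col : ∀ i j, g i j = σ i ∨ g i j = τ j

namespace IsInjLabeling

variable {ι κ A : Type*} {g : ι → κ → A} {σ : ι → A} {τ : κ → A}

theorem flip (h : IsInjLabeling g σ τ) : IsInjLabeling (flip g) τ σ where
  row_injective := h.col_injective
  col_injective := h.row_injective
  eq_row_or_eq_col j i := (h.eq_row_or_eq_col i j).symm

theorem antidiagonal_of_eq_row (h : IsInjLabeling g σ τ) {i k : ι} {j l : κ}
    (hik : i ≠ k) (hjl : j ≠ l) (hdiag : g i j = g k l) (hi : g i j = σ i) :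
    g i l = g i j ∧ g k j ≠ g i j := by
  have hk : g i j ≠ σ k := fun hk ↦ hik (h.row_injective (hi.symm.trans hk))
  have hl : g i j = τ l :=
    hdiag.trans ((h.eq_row_or_eq_col k l).resolve_left fun hkl ↦ hk (hdiag.trans hkl))
  have hj : g i j ≠ τ j := fun hj ↦ hjl (h.col_injective (hj.symm.trans hl))
  constructor
  · rcases h.eq_row_or_eq_col i l with hil | hil
    · exact hil.trans hi.symm
    · exact hil.trans hl.symm
  · intro hkj
    rcases h.eq_row_or_eq_col k j with hlabel | hlabel
    · exact hk (hkj.symm.trans hlabel)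
    · exact hj (hkj.symm.trans hlabel)

theorem xor_antidiagonal_eq (h : IsInjLabeling g σ τ) {i k : ι} {j l : κ}
    (hik : i ≠ k) (hjl : j ≠ l) (hdiag : g i j = g k l) :
    Xor (g i l = g i j) (g k j = g i j) := by
  rcases h.eq_row_or_eq_col i j with hi | hj
  · exact .inl (h.antidiagonal_of_eq_row hik hjl hdiag hi)
  · exact .inr (h.flip.antidiagonal_of_eq_row hjl hik hdiag hj)

theorem row_eq_of_entry_eq (h : IsInjLabeling g σ τ) {i : ι} {j l : κ}
    (hjl : j ≠ l) (heq : g i j = g i l) : σ i = g i j := by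
  by_contra hi
  have hj : g i j = τ j := (h.eq_row_or_eq_col i j).resolve_left (Ne.symm hi)
  have hl : g i l = τ l :=
    (h.eq_row_or_eq_col i l).resolve_left fun hil ↦ hi (heq.trans hil).symm
  exact hjl (h.col_injective (hj.symm.trans (heq.trans hl)))

end IsInjLabeling

section Obstructions

variable {p : ℕ} {A : Type*} {g : Fin p → Fin p → A}

theorem IsPluralityDAV.exists_isInjLabeling (h : IsPluralityDAV g) :
    ∃ σ τ : Fin p → A, IsInjLabeling g σ τ := by
  obtain ⟨σ, τ, hσ, hτ, hlabel⟩ := h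
  exact ⟨σ, τ, hσ.injective, hτ.injective, hlabel⟩

theorem TwiceInRow.row_eq {σ τ : Fin p → A} {i : Fin p} {a : A} (ha : TwiceInRow g i a)
    (h : IsInjLabeling g σ τ) : σ i = a := by
  obtain ⟨j, l, hjl, rfl, hl⟩ := ha
  exact h.row_eq_of_entry_eq hjl hl.symm

theorem TwiceInCol.col_eq {σ τ : Fin p → A} {j : Fin p} {a : A} (ha : TwiceInCol g j a)
    (h : IsInjLabeling g σ τ) : τ j = a :=
  TwiceInRow.row_eq (g := flip g) ha h.flip

theorem ContainsM1.not_isPluralityDAV (hm : ContainsM1 g) : ¬ IsPluralityDAV g := by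
  intro hg
  obtain ⟨σ, τ, h⟩ := hg.exists_isInjLabeling
  obtain ⟨i, k, j, l, hik, hjl, hdiag, hil, hkj⟩ := hm
  exact (h.xor_antidiagonal_eq hik hjl hdiag).or.elim hil hkj

theorem ContainsM2.not_isPluralityDAV (hm : ContainsM2 g) : ¬ IsPluralityDAV g := by
  intro hg
  obtain ⟨σ, τ, h⟩ := hg.exists_isInjLabeling
  obtain ⟨i, k, j, l, hik, hjl, hil, hkj, hdiag⟩ := hm
  rcases h.xor_antidiagonal_eq hik hjl hdiag with ⟨-, hne⟩ | ⟨-, hne⟩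
  · exact hne hkj.symm
  · exact hne hil.symm

theorem ContainsM3.not_isPluralityDAV (hm : ContainsM3 g) : ¬ IsPluralityDAV g := by
  intro hg
  obtain ⟨σ, τ, h⟩ := hg.exists_isInjLabeling
  rcases hm with ⟨i, a, b, hab, ha, hb⟩ | ⟨j, a, b, hab, ha, hb⟩
  · exact hab ((ha.row_eq h).symm.trans (hb.row_eq h))
  · exact hab ((ha.col_eq h).symm.trans (hb.col_eq h))

end Obstructions

section Decidability

variable {p : ℕ} {A : Type*} [DecidableEq A] (g : Fin p → Fin p → A)

instance : Decidable (ContainsM1 g) := by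
  unfold ContainsM1; infer_instance

instance : Decidable (ContainsM2 g) := by
  unfold ContainsM2; infer_instance

instance (i : Fin p) (a : A) : Decidable (TwiceInRow g i a) := by
  unfold TwiceInRow; infer_instance

instance (j : Fin p) (a : A) : Decidable (TwiceInCol g j a) := by
  unfold TwiceInCol; infer_instance

instance [Fintype A] : Decidable (ContainsM3 g) := by
  unfold ContainsM3; infer_instance

end Decidability

/-- The form `g1`, containing only the pattern `m1`; the candidates `a, b, c` are `0, 1, 2`. -/
def formM1 : Fin 3 → Fin 3 → Fin 3 :=
  ![![0, 1, 1],
    ![2, 0, 1],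
    ![2, 2, 0]]

/-- The form `g2`, containing only the pattern `m2`; the candidates `a, b, c` are `0, 1, 2`. -/
def formM2 : Fin 3 → Fin 3 → Fin 3 :=
  ![![0, 0, 0],
    ![0, 0, 1],
    ![0, 0, 2]]

/-- The form `g3`, containing only the pattern `m3`; the candidates `a, b, c, d` are
`0, 1, 2, 3`. -/
def formM3 : Fin 4 → Fin 4 → Fin 4 :=
  ![![0, 0, 1, 1],
    ![0, 2, 2, 1],
    ![0, 2, 3, 1],
    ![0, 3, 3, 1]]

theorem containsM1_formM1 : ContainsM1 formM1 :=
  ⟨0, 1, 0, 1, by decide⟩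

theorem containsM2_formM2 : ContainsM2 formM2 :=
  ⟨0, 1, 0, 1, by decide⟩

theorem containsM3_formM3 : ContainsM3 formM3 :=
  .inl ⟨0, 0, 1, by decide, ⟨0, 1, by decide⟩, ⟨2, 3, by decide⟩⟩

/-- Minimality of the forbidden set `{m1, m2, m3}`: for each pattern there is a
voting form (with all candidates appearing) containing only that pattern which
is not a plurality DAV form. -/
theorem forbidden_set_minimal :
    (∃ (p : ℕ) (A : Type) (inst : Fintype A) (g : Fin p → Fin p → A),
      @Fintype.card A inst = p ∧ (∀ a : A, ∃ i j, g i j = a) ∧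
      ContainsM1 g ∧ ¬ ContainsM2 g ∧ ¬ ContainsM3 g ∧ ¬ IsPluralityDAV g) ∧
    (∃ (p : ℕ) (A : Type) (inst : Fintype A) (g : Fin p → Fin p → A),
      @Fintype.card A inst = p ∧ (∀ a : A, ∃ i j, g i j = a) ∧
      ContainsM2 g ∧ ¬ ContainsM1 g ∧ ¬ ContainsM3 g ∧ ¬ IsPluralityDAV g) ∧
    (∃ (p : ℕ) (A : Type) (inst : Fintype A) (g : Fin p → Fin p → A),
      @Fintype.card A inst = p ∧ (∀ a : A, ∃ i j, g i j = a) ∧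
      ContainsM3 g ∧ ¬ ContainsM1 g ∧ ¬ ContainsM2 g ∧ ¬ IsPluralityDAV g) :=
  ⟨⟨3, Fin 3, inferInstance, formM1, Fintype.card_fin 3, by decide,
      containsM1_formM1, by decide, by decide, containsM1_formM1.not_isPluralityDAV⟩,
   ⟨3, Fin 3, inferInstance, formM2, Fintype.card_fin 3, by decide,
      containsM2_formM2, by decide, by decide, containsM2_formM2.not_isPluralityDAV⟩,
   ⟨4, Fin 4, inferInstance, formM3, Fintype.card_fin 4, by decide,
      containsM3_formM3, by decide, by decide, containsM3_formM3.not_isPluralityDAV⟩⟩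
end

section
/- Consider n voters with positive integer weights α_1, …, α_n, two candidates a and b, and the DAV correspondence h. Fix a voter i and two distinct values z, z' ∈ {0,…,α_i}. Then s_h(i,z,a) = s_h(i,z',a) and s_h(i,z,b) = s_h(i,z',b) hold if and only if the planes h_{i,z} and h_{i,z'} are identical, i.e., for every pair of strategy profiles w, w' with w_i = z, w'_i = z', and w_j = w'_j for all j ≠ i, one has h(w) = h(w'). -/
/-- In distributed approval voting with two candidates `a` and `b`, voter `i`
with weight `w i` playing `z i` gives `z i` cards to `a` and `w i - z i` cards
to `b`. `twoAM w z a b` is the set of candidates (among `{a, b}`) receiving the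
maximum total number of cards. -/
def twoAM {n : ℕ} {A : Type*} [DecidableEq A] (w z : Fin n → ℕ) (a b : A) : Set A :=
  {c | c ∈ ({a, b} : Set A) ∧
    ∀ d ∈ ({a, b} : Set A),
      (if d = a then ∑ i, z i else ∑ i, (w i - z i)) ≤
        (if c = a then ∑ i, z i else ∑ i, (w i - z i))}

/-! Replacing the `i`-th strategy `z` by `z'` is a bijection between the two planes, and it moves
every profile in the same direction. The profiles at which `a` wins form an upper set and those at
which `b` wins form a lower set. Hence, once the plane at `z'` is identified with the plane at `z`
by this bijection, the two occurrence sets of each candidate are comparable by inclusion, and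
comparable finite sets of equal cardinality are equal. -/

theorem ncard_eq_ncard_iff_of_subset_or_subset {β : Type*} {s t : Set β} (hs : s.Finite)
    (ht : t.Finite) (h : s ⊆ t ∨ t ⊆ s) : s.ncard = t.ncard ↔ s = t := by
  refine ⟨fun hcard => ?_, congrArg Set.ncard⟩
  rcases h with hst | hts
  · exact Set.eq_of_subset_of_ncard_le hst hcard.ge ht
  · exact (Set.eq_of_subset_of_ncard_le hts hcard.le hs).symm

section Plane

variable {ι : Type*} {α : ι → Type*} [∀ j, Preorder (α j)]

/-- The profiles bounded by `w` in which voter `i` plays `z`: the domain of the plane `h_{i,z}` of a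
correspondence `h`. Strategies range over arbitrary preorders; for DAV, they are the natural numbers
and `w` is the vector of weights. -/
def profilePlane (w : ∀ j, α j) (i : ι) (z : α i) : Set (∀ j, α j) :=
  {v | v ≤ w ∧ v i = z}

variable {w : ∀ j, α j} {i : ι} {z z' : α i}

theorem setOf_and_eq_profilePlane_inter (p : (∀ j, α j) → Prop) :
    {v | (∀ j, v j ≤ w j) ∧ v i = z ∧ p v} = profilePlane w i z ∩ {v | p v} :=
  Set.ext fun _ => and_assoc.symm

variable [DecidableEq ι]

theorem mapsTo_update_profilePlane (hz' : z' ≤ w i) :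
    Set.MapsTo (Function.update · i z') (profilePlane w i z) (profilePlane w i z') :=
  fun _ hv => ⟨update_le_iff.2 ⟨hz', fun j _ => hv.1 j⟩, Function.update_self ..⟩

theorem update_eq_self_of_mem_profilePlane {v : ∀ j, α j} (hv : v ∈ profilePlane w i z) :
    Function.update v i z = v := by
  rw [← hv.2, Function.update_eq_self]

theorem leftInvOn_update_profilePlane :
    Set.LeftInvOn (Function.update · i z) (Function.update · i z') (profilePlane w i z) :=
  fun _ hv => Function.update_idem .. |>.trans (update_eq_self_of_mem_profilePlane hv)

theorem bijOn_update_profilePlane (hz : z ≤ w i) (hz' : z' ≤ w i) :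
    Set.BijOn (Function.update · i z') (profilePlane w i z) (profilePlane w i z') :=
  Set.InvOn.bijOn ⟨leftInvOn_update_profilePlane, leftInvOn_update_profilePlane⟩
    (mapsTo_update_profilePlane hz') (mapsTo_update_profilePlane hz)

theorem forall_profilePlane_agree_iff (hz' : z' ≤ w i) (r : (∀ j, α j) → (∀ j, α j) → Prop) :
    (∀ v v', (∀ j, v j ≤ w j) → (∀ j, v' j ≤ w j) → v i = z → v' i = z' →
      (∀ j, j ≠ i → v j = v' j) → r v v') ↔
    ∀ v ∈ profilePlane w i z, r v (Function.update v i z') := by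
  constructor
  · intro h v hv
    obtain ⟨hle, hi⟩ := mapsTo_update_profilePlane hz' hv
    exact h v _ hv.1 hle hv.2 hi fun j hj => (Function.update_of_ne hj ..).symm
  · intro h v v' hv _ hvi hvi' hagree
    obtain rfl : v' = Function.update v i z' :=
      Function.eq_update_iff.2 ⟨hvi', fun j hj => (hagree j hj).symm⟩
    exact h v ⟨hv, hvi⟩

theorem ncard_profilePlane_inter_eq_ncard_preimage (hz : z ≤ w i) (hz' : z' ≤ w i)
    (U : Set (∀ j, α j)) :
    (profilePlane w i z' ∩ U).ncard =
      (profilePlane w i z ∩ (Function.update · i z') ⁻¹' U).ncard := by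
  have hbij := bijOn_update_profilePlane hz hz'
  rw [← hbij.image_eq, ← Set.image_inter_preimage,
    (hbij.injOn.mono Set.inter_subset_left).ncard_image]

theorem monotone_preimage_update {U : Set (∀ j, α j)} (hU : IsUpperSet U) :
    Monotone fun x : α i => (Function.update · i x) ⁻¹' U :=
  fun _ _ hxy _ => hU (update_le_update_iff'.2 hxy)

theorem antitone_preimage_update {U : Set (∀ j, α j)} (hU : IsLowerSet U) :
    Antitone fun x : α i => (Function.update · i x) ⁻¹' U :=
  fun _ _ hxy _ => hU (update_le_update_iff'.2 hxy)

theorem preimage_update_subset_or_subset {U : Set (∀ j, α j)} (hU : IsUpperSet U ∨ IsLowerSet U)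
    (hzz' : z ≤ z' ∨ z' ≤ z) :
    (Function.update · i z) ⁻¹' U ⊆ (Function.update · i z') ⁻¹' U ∨
      (Function.update · i z') ⁻¹' U ⊆ (Function.update · i z) ⁻¹' U := by
  rcases hU with hU | hU
  · exact hzz'.imp (monotone_preimage_update hU ·) (monotone_preimage_update hU ·)
  · exact (hzz'.imp (antitone_preimage_update hU ·) (antitone_preimage_update hU ·)).symm

theorem ncard_profilePlane_inter_eq_iff (hfin : (profilePlane w i z).Finite)
    (hz : z ≤ w i) (hz' : z' ≤ w i) (hzz' : z ≤ z' ∨ z' ≤ z) {U : Set (∀ j, α j)}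
    (hU : IsUpperSet U ∨ IsLowerSet U) :
    (profilePlane w i z ∩ U).ncard = (profilePlane w i z' ∩ U).ncard ↔
      ∀ v ∈ profilePlane w i z, (v ∈ U ↔ Function.update v i z' ∈ U) := by
  have hcomparable := (preimage_update_subset_or_subset hU hzz').imp
    (Set.inter_subset_inter_right (profilePlane w i z))
    (Set.inter_subset_inter_right (profilePlane w i z))
  rw [ncard_profilePlane_inter_eq_ncard_preimage hz hz,
    ncard_profilePlane_inter_eq_ncard_preimage hz hz',
    ncard_eq_ncard_iff_of_subset_or_subset (hfin.inter_of_left _) (hfin.inter_of_left _)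
      hcomparable, Set.ext_iff]
  refine forall_congr' fun v => and_congr_right_iff.trans (forall_congr' fun hv => ?_)
  rw [Set.mem_preimage, Set.mem_preimage, update_eq_self_of_mem_profilePlane hv]

end Plane

section TwoCandidate

variable {n : ℕ} {A : Type*} [DecidableEq A] {a b : A}

theorem left_mem_twoAM_iff (hab : a ≠ b) (w v : Fin n → ℕ) :
    a ∈ twoAM w v a b ↔ ∑ j, (w j - v j) ≤ ∑ j, v j := by
  simp [twoAM, hab.symm]

theorem right_mem_twoAM_iff (hab : a ≠ b) (w v : Fin n → ℕ) :
    b ∈ twoAM w v a b ↔ ∑ j, v j ≤ ∑ j, (w j - v j) := by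
  simp [twoAM, hab.symm]

theorem twoAM_eq_twoAM_iff (w v v' : Fin n → ℕ) :
    twoAM w v a b = twoAM w v' a b ↔
      (a ∈ twoAM w v a b ↔ a ∈ twoAM w v' a b) ∧ (b ∈ twoAM w v a b ↔ b ∈ twoAM w v' a b) := by
  refine ⟨fun h => by simp only [h, and_self], fun ⟨ha, hb⟩ => Set.ext fun c => ?_⟩
  by_cases hc : c ∈ ({a, b} : Set A)
  · rcases hc with rfl | rfl
    exacts [ha, hb]
  · exact iff_of_false (fun h => hc h.1) (fun h => hc h.1)

theorem isUpperSet_left_mem_twoAM (hab : a ≠ b) (w : Fin n → ℕ) :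
    IsUpperSet {v | a ∈ twoAM w v a b} := by
  intro v v' hle hv
  rw [Set.mem_ofPred_eq, left_mem_twoAM_iff hab] at hv ⊢
  calc ∑ j, (w j - v' j) ≤ ∑ j, (w j - v j) := by gcongr with j; exact hle j
    _ ≤ ∑ j, v j := hv
    _ ≤ ∑ j, v' j := by gcongr with j; exact hle j

theorem isLowerSet_right_mem_twoAM (hab : a ≠ b) (w : Fin n → ℕ) :
    IsLowerSet {v | b ∈ twoAM w v a b} := by
  intro v v' hle hv
  rw [Set.mem_ofPred_eq, right_mem_twoAM_iff hab] at hv ⊢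
  calc ∑ j, v' j ≤ ∑ j, v j := by gcongr with j; exact hle j
    _ ≤ ∑ j, (w j - v j) := hv
    _ ≤ ∑ j, (w j - v' j) := by gcongr with j; exact hle j

end TwoCandidate

/-- Two planes `h_{i,z}` and `h_{i,z'}` of the two-candidate DAV correspondence
are identical iff their signatures (counts of occurrences of `a` and of `b`)
coincide. -/
theorem twoCandidate_correspondence_planes_eq_iff_signatures_eq
    (n : ℕ) (w : Fin n → ℕ) (hw : ∀ i, 1 ≤ w i)
    {A : Type*} [DecidableEq A] (a b : A) (hab : a ≠ b)
    (i : Fin n) (z z' : ℕ) (hz : z ≤ w i) (hz' : z' ≤ w i) (hne : z ≠ z') :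
    ({v : Fin n → ℕ | (∀ j, v j ≤ w j) ∧ v i = z ∧ a ∈ twoAM w v a b}.ncard =
        {v : Fin n → ℕ | (∀ j, v j ≤ w j) ∧ v i = z' ∧ a ∈ twoAM w v a b}.ncard ∧
      {v : Fin n → ℕ | (∀ j, v j ≤ w j) ∧ v i = z ∧ b ∈ twoAM w v a b}.ncard =
        {v : Fin n → ℕ | (∀ j, v j ≤ w j) ∧ v i = z' ∧ b ∈ twoAM w v a b}.ncard) ↔
    (∀ v v' : Fin n → ℕ, (∀ j, v j ≤ w j) → (∀ j, v' j ≤ w j) →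
      v i = z → v' i = z' → (∀ j, j ≠ i → v j = v' j) →
      twoAM w v a b = twoAM w v' a b) := by
  have hfin : (profilePlane w i z).Finite := (Set.finite_Iic w).subset fun _ hv => hv.1
  have ha := ncard_profilePlane_inter_eq_iff hfin hz hz' (le_total z z')
    (Or.inl (isUpperSet_left_mem_twoAM hab w))
  have hb := ncard_profilePlane_inter_eq_iff hfin hz hz' (le_total z z')
    (Or.inr (isLowerSet_right_mem_twoAM hab w))
  simp only [Set.mem_ofPred_eq] at ha hb
  simp only [setOf_and_eq_profilePlane_inter]
  rw [ha, hb, forall_profilePlane_agree_iff hz' fun v v' => twoAM w v a b = twoAM w v' a b]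
  simp only [twoAM_eq_twoAM_iff, forall_and]
end
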